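/- Let Q be a polytope in V and P a deformation of Q, let F be a face of Q and z a vertex of Q (i.e., a one-point face) with z ∈ F, and set C := C_F(Q) and C̃ := C_{\{z\}}(Q). Then for every v ∈ V, the translate C + v tightly contains P if and only if there exists a point ṽ ∈ lineal(C) + v such that C̃ + ṽ tightly contains P; moreover, such a point ṽ is unique and is a vertex of P. -/

import Mathlib

/-!
Let `y₀` expose the vertex `z` of `Q`. Since `P` and `Q` have normal cones covering the same
functionals, `y₀` attains its maximum on `P`, along a face `G`. The normal cone of `G` is a union
of normal cones of faces of `Q`; the one containing `y₀` can only be that of `{z}`, so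
`N_z(Q) ⊆ N_G(P)`. Points of `G` differ by vectors orthogonal to `N_z(Q)`, and such vectors lie in
the lineality space of `C_z(Q)`, which is zero; hence `G = {w}` is a vertex (`exists_vertex`).

The tangent cone at a face of a polyhedron is the polar of the normal cone (`mem_tanCone_iff`), so
`N_z(Q) ⊆ N_w(P)` says that `w + C_z(Q)` tightly contains `P`, and `w` is the only apex with this
property, because any such apex lies in `P` and maximizes `y₀`. Finally `C_F(Q) + v` tightly
contains `P` exactly when `w ∈ lineal (C_F(Q)) + v`: if `p ∈ P ∩ (lineal (C_F(Q)) + v)`, then every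
`y ∈ N_F(Q) ⊆ N_z(Q)` satisfies `⟪y, w⟫ ≥ ⟪y, p⟫ = ⟪y, v⟫`, so `v - w ∈ C_F(Q)`.
-/

open RealInnerProductSpace

noncomputable def indic {V : Type*} (P : Set V) : V → ℤ := P.indicator 1

noncomputable def iv (p : Prop) : ℤ := @ite _ p (Classical.propDecidable p) 1 0

def Valuative {V A : Type*} [AddCommGroup A] (Fam : Set (Set V)) (f : Set V → A) : Prop :=
  ∀ (k : ℕ) (a : Fin k → ℤ) (P : Fin k → Set V),
    (∀ i, P i ∈ Fam) → (∑ i, a i • indic (P i)) = 0 → (∑ i, a i • f (P i)) = 0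

variable {V : Type*} [NormedAddCommGroup V] [InnerProductSpace ℝ V] [FiniteDimensional ℝ V]

def IsPolyhedron (P : Set V) : Prop :=
  P.Nonempty ∧ ∃ s : Finset (V × ℝ), P = {x | ∀ p ∈ s, ⟪p.1, x⟫ ≤ p.2}

def IsFace (Q F : Set V) : Prop :=
  ∃ y : V, F.Nonempty ∧ F = {x | x ∈ Q ∧ ∀ q ∈ Q, ⟪y, q⟫ ≤ ⟪y, x⟫}

def IsConvexCone (C : Set V) : Prop :=
  (0 : V) ∈ C ∧ Convex ℝ C ∧ ∀ c : ℝ, 0 ≤ c → ∀ x ∈ C, c • x ∈ C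

def coneGen (S : Set V) : Set V := ⋂₀ {C : Set V | IsConvexCone C ∧ S ⊆ C}

def tanCone (Q F : Set V) : Set V := coneGen {d | ∃ q ∈ Q, ∃ v ∈ F, d = q - v}

def normCone (Q F : Set V) : Set V := {y | ∀ v ∈ F, ∀ q ∈ Q, ⟪y, q⟫ ≤ ⟪y, v⟫}

def IsExtDef (Q P : Set V) : Prop :=
  IsPolyhedron P ∧ ∀ F : Set V, IsFace P F → ∃ 𝒢 : Set (Set V),
    (∀ G ∈ 𝒢, IsFace Q G) ∧ normCone P F = ⋃ G ∈ 𝒢, normCone Q G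

def lineal (C : Set V) : Set V := C ∩ (-C)

def transl (v : V) (C : Set V) : Set V := (fun x => v + x) '' C

def TightContains (C : Set V) (v : V) (P : Set V) : Prop :=
  P ⊆ transl v C ∧ (P ∩ transl v (lineal C)).Nonempty

/-- A deformation of `Q`: an extended deformation whose normal cones cover the same set
of functionals as the normal cones of `Q`. -/
def IsDefm (Q P : Set V) : Prop :=
  IsExtDef Q P ∧
    (⋃ F ∈ {F : Set V | IsFace P F}, normCone P F) =
      ⋃ G ∈ {G : Set V | IsFace Q G}, normCone Q G

/-- A polytope: a bounded polyhedron. -/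
def IsPolytope (P : Set V) : Prop := IsPolyhedron P ∧ Bornology.IsBounded P

lemma mem_transl {v x : V} {C : Set V} : x ∈ transl v C ↔ x - v ∈ C := by
  constructor
  · rintro ⟨c, hc, rfl⟩
    simpa using hc
  · intro h
    exact ⟨x - v, h, by simp⟩

lemma mem_lineal {x : V} {C : Set V} : x ∈ lineal C ↔ x ∈ C ∧ -x ∈ C := Iff.rfl

lemma convex_face {Q F : Set V} (hQ : IsPolyhedron Q) (hF : IsFace Q F) : Convex ℝ F := by
  obtain ⟨-, s, rfl⟩ := hQ
  obtain ⟨y, -, rfl⟩ := hF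
  intro a ha b hb c d hc hd hcd
  refine ⟨fun p hp => ?_, fun q hq => ?_⟩
  · have h1 := mul_le_mul_of_nonneg_left (ha.1 p hp) hc
    have h2 := mul_le_mul_of_nonneg_left (hb.1 p hp) hd
    rw [inner_add_right, inner_smul_right, inner_smul_right]
    calc _ ≤ c * p.2 + d * p.2 := add_le_add h1 h2
      _ = p.2 := by rw [← add_mul, hcd, one_mul]
  · have h1 := mul_le_mul_of_nonneg_left (ha.2 q hq) hc
    have h2 := mul_le_mul_of_nonneg_left (hb.2 q hq) hd
    rw [inner_add_right, inner_smul_right, inner_smul_right]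
    calc ⟪y, q⟫ = c * ⟪y, q⟫ + d * ⟪y, q⟫ := by rw [← add_mul, hcd, one_mul]
      _ ≤ _ := add_le_add h1 h2

/-- A convex set satisfying finitely many linear inequalities has a point at which every inequality
that is strict somewhere on the set is strict: a substitute for a relative interior point. -/
lemma exists_strict_point {F : Set V} (hne : F.Nonempty) (hconv : Convex ℝ F)
    (t : Finset (V × ℝ)) (ht : ∀ x ∈ F, ∀ p ∈ t, ⟪p.1, x⟫ ≤ p.2) :
    ∃ w ∈ F, ∀ p ∈ t, (∃ x ∈ F, ⟪p.1, x⟫ < p.2) → ⟪p.1, w⟫ < p.2 := by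
  classical
  induction t using Finset.induction_on with
  | empty => exact ⟨hne.some, hne.some_mem, by simp⟩
  | insert a t ha ih =>
    obtain ⟨w, hwF, hw⟩ := ih fun x hx p hp => ht x hx p (Finset.mem_insert_of_mem hp)
    by_cases h : ∃ x ∈ F, ⟪a.1, x⟫ < a.2
    · obtain ⟨x, hxF, hx⟩ := h
      refine ⟨(1 / 2 : ℝ) • w + (1 / 2 : ℝ) • x,
        hconv hwF hxF (by norm_num) (by norm_num) (by norm_num), fun p hp hstrict => ?_⟩
      rw [inner_add_right, inner_smul_right, inner_smul_right]
      rcases Finset.mem_insert.1 hp with rfl | hp'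
      · linarith [ht w hwF p hp]
      · linarith [ht x hxF p hp, hw p hp' hstrict]
    · refine ⟨w, hwF, fun p hp hstrict => ?_⟩
      rcases Finset.mem_insert.1 hp with rfl | hp'
      · exact absurd hstrict h
      · exact hw p hp' hstrict

/-- If every inequality that increases in the direction `x` is strict at `w`, one can move from `w` a
positive distance in the direction `x`. -/
lemma exists_step (t : Finset (V × ℝ)) (w x : V)
    (h : ∀ p ∈ t, ⟪p.1, w⟫ ≤ p.2 ∧ (⟪p.1, x⟫ ≤ 0 ∨ ⟪p.1, w⟫ < p.2)) :
    ∃ ε : ℝ, 0 < ε ∧ ∀ p ∈ t, ⟪p.1, w + ε • x⟫ ≤ p.2 := by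
  have hev : ∀ p ∈ t, ∀ᶠ ε : ℝ in nhdsWithin 0 (Set.Ioi 0), ⟪p.1, w + ε • x⟫ ≤ p.2 := by
    intro p hp
    obtain ⟨h1, h2 | h2⟩ := h p hp
    · filter_upwards [self_mem_nhdsWithin] with ε hε
      rw [inner_add_right, inner_smul_right]
      have := mul_nonpos_of_nonneg_of_nonpos (le_of_lt hε) h2
      linarith
    · apply Filter.Eventually.filter_mono nhdsWithin_le_nhds
      have hc : Continuous fun ε : ℝ => ⟪p.1, w + ε • x⟫ := by fun_prop
      have h0 : ⟪p.1, w + (0 : ℝ) • x⟫ < p.2 := by simpa using h2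
      filter_upwards [hc.continuousAt.eventually_lt continuousAt_const h0] with ε hε
      exact hε.le
  have := ((Filter.eventually_all_finset t).2 hev).and self_mem_nhdsWithin
  obtain ⟨ε, h1, h2⟩ := this.exists
  exact ⟨ε, h2, h1⟩

/-- The tangent cone at a face of a polyhedron is the polar of the normal cone. The inclusion of
the polar in the tangent cone uses only the normals of the inequalities tight on all of `F`. -/
lemma mem_tanCone_iff {Q F : Set V} (hQ : IsPolyhedron Q) (hF : IsFace Q F) {x : V} :
    x ∈ tanCone Q F ↔ ∀ y ∈ normCone Q F, ⟪y, x⟫ ≤ 0 := by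
  constructor
  · intro hx y hy
    refine hx {x | ⟪y, x⟫ ≤ 0} ⟨⟨by simp, ?_, ?_⟩, ?_⟩
    · exact convex_halfSpace_le (innerₛₗ ℝ y).isLinear 0
    · intro c hc a ha
      simp only [Set.mem_ofPred_eq, inner_smul_right] at ha ⊢
      exact mul_nonpos_of_nonneg_of_nonpos hc ha
    · rintro d ⟨q, hq, w, hw, rfl⟩
      simpa [inner_sub_right] using hy w hw q hq
  · intro hx
    have hconv := convex_face hQ hF
    have hFQ : F ⊆ Q := by
      obtain ⟨y, -, rfl⟩ := hF
      exact fun a ha => ha.1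
    have hne : F.Nonempty := hF.choose_spec.1
    obtain ⟨-, s, rfl⟩ := hQ
    obtain ⟨w, hwF, hw⟩ := exists_strict_point hne hconv s fun a ha => hFQ ha
    obtain ⟨ε, hε, hstep⟩ := exists_step s w x fun p hp => by
      refine ⟨hFQ hwF p hp, ?_⟩
      by_cases h : ∃ a ∈ F, ⟪p.1, a⟫ < p.2
      · exact Or.inr (hw p hp h)
      · push Not at h
        exact Or.inl (hx p.1 fun a ha q hq => (hq p hp).trans (h a ha))
    rintro K ⟨hK, hsub⟩
    have hmem := hK.2.2 ε⁻¹ (inv_nonneg.2 hε.le) _ (hsub ⟨w + ε • x, hstep, w, hwF, rfl⟩)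
    rwa [add_sub_cancel_left, smul_smul, inv_mul_cancel₀ hε.ne', one_smul] at hmem

/-- The tangent cone at a vertex is pointed: a functional exposing the vertex is negative on all of
its nonzero vectors. -/
lemma lineal_vertex {Q : Set V} {z : V} (hz : IsFace Q {z}) {x : V}
    (hx : x ∈ lineal (tanCone Q {z})) : x = 0 := by
  obtain ⟨y, -, hy⟩ := hz
  have hzQ : z ∈ Q ∧ ∀ q ∈ Q, ⟪y, q⟫ ≤ ⟪y, z⟫ := by
    have : z ∈ ({z} : Set V) := rfl
    rwa [hy] at this
  have key : ∀ a ∈ tanCone Q {z}, a = 0 ∨ ⟪y, a⟫ < 0 := by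
    intro a ha
    refine ha {a | a = 0 ∨ ⟪y, a⟫ < 0} ⟨⟨Or.inl rfl, ?_, ?_⟩, ?_⟩
    · intro a ha b hb c d hc hd hcd
      simp only [Set.mem_ofPred_eq, inner_add_right, inner_smul_right] at ha hb ⊢
      rcases hc.eq_or_lt with rfl | hc'
      · obtain rfl : d = 1 := by linarith
        simpa using hb
      rcases hd.eq_or_lt with rfl | hd'
      · obtain rfl : c = 1 := by linarith
        simpa using ha
      rcases ha with rfl | ha <;> rcases hb with rfl | hb
      · simp
      · right
        simpa using mul_neg_of_pos_of_neg hd' hb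
      · right
        simpa using mul_neg_of_pos_of_neg hc' ha
      · right
        linarith [mul_neg_of_pos_of_neg hd' hb, mul_neg_of_pos_of_neg hc' ha]
    · intro c hc a ha
      simp only [Set.mem_ofPred_eq, inner_smul_right] at ha ⊢
      rcases hc.eq_or_lt with rfl | hc'
      · simp
      rcases ha with rfl | ha
      · simp
      · exact Or.inr (mul_neg_of_pos_of_neg hc' ha)
    · rintro d ⟨q, hq, w, hw, rfl⟩
      obtain rfl : w = z := hw
      simp only [Set.mem_ofPred_eq, inner_sub_right, sub_neg, sub_eq_zero]
      rcases (hzQ.2 q hq).eq_or_lt with h | h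
      · left
        have : q ∈ ({w} : Set V) := by
          rw [hy]
          exact ⟨hq, fun r hr => by rw [h]; exact hzQ.2 r hr⟩
        exact this
      · exact Or.inr h
  rcases key x hx.1 with h | h
  · exact h
  rcases key (-x) hx.2 with h' | h'
  · exact neg_eq_zero.1 h'
  · rw [inner_neg_right] at h'
    linarith

/-- Each vertex `z` of `Q` corresponds to a vertex `w` of the deformation `P` with
`N_z(Q) ⊆ N_w(P)`; some functional in `N_z(Q)` exposes `w`. -/
lemma exists_vertex {Q P : Set V} (hQ : IsPolyhedron Q) (hP : IsDefm Q P) {z : V}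
    (hz : IsFace Q {z}) :
    ∃ w y : V, y ∈ normCone Q {z} ∧ {w} = {x | x ∈ P ∧ ∀ q ∈ P, ⟪y, q⟫ ≤ ⟪y, x⟫} ∧
      normCone Q {z} ⊆ normCone P {w} := by
  obtain ⟨y, hne, hy⟩ := id hz
  have hyz : y ∈ normCone Q {z} := by
    intro a ha q hq
    rw [hy] at ha
    exact ha.2 q hq
  set G : Set V := {x | x ∈ P ∧ ∀ q ∈ P, ⟪y, q⟫ ≤ ⟪y, x⟫} with hG
  have hGne : G.Nonempty := by
    have hmem : y ∈ ⋃ F ∈ {F : Set V | IsFace P F}, normCone P F := by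
      rw [hP.2]
      exact Set.mem_biUnion (x := {z}) hz hyz
    simp only [Set.mem_iUnion] at hmem
    obtain ⟨F', ⟨y', ⟨a, ha⟩, hF'⟩, hyF'⟩ := hmem
    refine ⟨a, ?_, hyF' a ha⟩
    rw [hF'] at ha
    exact ha.1
  obtain ⟨𝒢, h𝒢, hN⟩ := hP.1.2 G ⟨y, hGne, hG⟩
  have hsub : normCone Q {z} ⊆ normCone P G := by
    have hyG : y ∈ normCone P G := fun a ha q hq => ha.2 q hq
    rw [hN] at hyG ⊢
    simp only [Set.mem_iUnion] at hyG
    obtain ⟨H, hH, hyH⟩ := hyG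
    -- `y` exposes `{z}`, so the only face of `Q` whose normal cone contains `y` is `{z}`.
    obtain ⟨y', hHne, hHeq⟩ := h𝒢 H hH
    have hHz : H ⊆ {z} := by
      intro a ha
      rw [hy]
      refine ⟨?_, hyH a ha⟩
      rw [hHeq] at ha
      exact ha.1
    obtain rfl : H = {z} := (Set.Nonempty.subset_singleton_iff hHne).1 hHz
    exact Set.subset_biUnion_of_mem (u := fun G => normCone Q G) hH
  obtain ⟨w, hw⟩ := hGne
  refine ⟨w, y, hyz, ?_, fun n hn a ha => ?_⟩
  · refine Set.Subset.antisymm (Set.singleton_subset_iff.2 hw) fun a ha => ?_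
    have h0 : ∀ n ∈ normCone Q {z}, ⟪n, a⟫ = ⟪n, w⟫ := fun n hn =>
      le_antisymm (hsub hn w hw a ha.1) (hsub hn a ha w hw.1)
    refine sub_eq_zero.1 (lineal_vertex hz (mem_lineal.2 ⟨?_, ?_⟩))
    · exact (mem_tanCone_iff hQ hz).2 fun n hn => by simp [inner_sub_right, h0 n hn]
    · exact (mem_tanCone_iff hQ hz).2 fun n hn => by simp [inner_sub_right, h0 n hn]
  · obtain rfl : a = w := ha
    exact hsub hn a hw

/-- for a polytope `Q`, a deformation `P` of `Q`, a face `F` of `Q` and a vertex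
`z ∈ F` of `Q`, the translate `C_F(Q) + v` tightly contains `P` iff some translate
`C_{{z}}(Q) + ṽ` with `ṽ ∈ lineal(C_F(Q)) + v` tightly contains `P`; moreover such `ṽ` is
unique and is a vertex of `P`. -/
theorem tight_containment_vertex_cone (Q P : Set V) (hQ : IsPolytope Q) (hP : IsDefm Q P)
    (F : Set V) (hF : IsFace Q F) (z : V) (hz : IsFace Q {z}) (hzF : z ∈ F) (v : V) :
    (TightContains (tanCone Q F) v P ↔
      ∃ u ∈ transl v (lineal (tanCone Q F)), TightContains (tanCone Q {z}) u P) ∧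
    (∀ u ∈ transl v (lineal (tanCone Q F)), TightContains (tanCone Q {z}) u P →
      (IsFace P {u} ∧
        ∀ u' ∈ transl v (lineal (tanCone Q F)), TightContains (tanCone Q {z}) u' P → u' = u)) := by
  obtain ⟨w, y, hyz, hwG, hsub⟩ := exists_vertex hQ.1 hP hz
  have hw : w ∈ P ∧ ∀ q ∈ P, ⟪y, q⟫ ≤ ⟪y, w⟫ := by
    have : w ∈ ({w} : Set V) := rfl
    rwa [hwG] at this
  have hNsub : normCone Q F ⊆ normCone Q {z} := by
    rintro n hn a rfl
    exact hn a hzF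
  have htight : TightContains (tanCone Q {z}) w P := by
    refine ⟨fun q hq => ?_, w, hw.1, ?_⟩
    · rw [mem_transl, mem_tanCone_iff hQ.1 hz]
      intro n hn
      rw [inner_sub_right, sub_nonpos]
      exact hsub hn w rfl q hq
    · rw [mem_transl, mem_lineal, mem_tanCone_iff hQ.1 hz, mem_tanCone_iff hQ.1 hz]
      simp
  have huniq : ∀ u, TightContains (tanCone Q {z}) u P → u = w := by
    rintro u ⟨hPu, p, hpP, hp⟩
    obtain rfl : p = u := sub_eq_zero.1 (lineal_vertex hz (mem_transl.1 hp))
    change p ∈ ({w} : Set V)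
    rw [hwG]
    refine ⟨hpP, fun q hq => ?_⟩
    have := (mem_tanCone_iff hQ.1 hz).1 (mem_transl.1 (hPu hq)) y hyz
    rwa [inner_sub_right, sub_nonpos] at this
  refine ⟨⟨?_, ?_⟩, ?_⟩
  · rintro ⟨hPv, p, hpP, hp⟩
    refine ⟨w, ?_, htight⟩
    rw [mem_transl, mem_lineal] at hp ⊢
    refine ⟨mem_transl.1 (hPv hw.1), ?_⟩
    rw [mem_tanCone_iff hQ.1 hF] at hp ⊢
    intro n hn
    have h1 := (mem_tanCone_iff hQ.1 hF).1 hp.2 n hn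
    have h2 := hsub (hNsub hn) w rfl p hpP
    rw [inner_neg_right, inner_sub_right] at h1 ⊢
    linarith
  · rintro ⟨u, hu, hut⟩
    obtain rfl := huniq u hut
    refine ⟨fun q hq => ?_, u, hw.1, hu⟩
    have h1 := (mem_transl.1 hu).1
    have h2 := mem_transl.1 (hut.1 hq)
    rw [mem_tanCone_iff hQ.1 hF] at h1
    rw [mem_tanCone_iff hQ.1 hz] at h2
    rw [mem_transl, mem_tanCone_iff hQ.1 hF]
    intro n hn
    have h3 := h1 n hn
    have h4 := h2 n (hNsub hn)
    rw [inner_sub_right] at h3 h4 ⊢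
    linarith
  · intro u _ hut
    obtain rfl := huniq u hut
    exact ⟨⟨y, Set.singleton_nonempty u, hwG⟩, fun u' _ hut' => huniq u' hut'⟩
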